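/- Let Z_N be an N×N matrix with i.i.d. entries z_{ij}/√N where z_{ij} are standard complex Gaussians, and let ε ∈ {1,*}^k. Then lim_{N→∞} E[(1/N)Tr(Z^{ε₁}···Z^{ε_k})] equals the number of non-crossing pairings π of {1,...,k} such that ε_a ≠ ε_b for every pair {a,b} ∈ π. -/

import Mathlib

open MeasureTheory ProbabilityTheory Complex Matrix Filter

/-- Non-crossing set partitions of `{1,…,k}` (modeled as `Fin k`). -/
def IsNonCrossing {k : ℕ} (π : Finpartition (Finset.univ : Finset (Fin k))) : Prop :=
  ¬ ∃ (a b c d : Fin k) (B B' : Finset (Fin k)), a < b ∧ b < c ∧ c < d ∧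
      B ∈ π.parts ∧ B' ∈ π.parts ∧ B ≠ B' ∧ a ∈ B ∧ c ∈ B ∧ b ∈ B' ∧ d ∈ B'

/-- A pairing is a set partition all of whose blocks have exactly two elements. -/
def IsPairing {k : ℕ} (π : Finpartition (Finset.univ : Finset (Fin k))) : Prop :=
  ∀ B ∈ π.parts, B.card = 2

/-- The entrywise distribution of an `N × N` matrix of i.i.d. standard complex Gaussians. -/
noncomputable def gaussMatrixMeasure (N : ℕ) : Measure (Fin N → Fin N → ℝ × ℝ) :=
  Measure.pi fun _ => Measure.pi fun _ =>
    (gaussianReal 0 (1 / 2)).prod (gaussianReal 0 (1 / 2))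

/-- The Gaussian random matrix `Z_N` with entries `z_{ij}/√N`. -/
noncomputable def gaussMatrix {N : ℕ} (ω : Fin N → Fin N → ℝ × ℝ) :
    Matrix (Fin N) (Fin N) ℂ :=
  Matrix.of fun i j => (((ω i j).1 : ℂ) + ((ω i j).2 : ℂ) * I) / (Real.sqrt N : ℂ)

/-- All ways of writing a word as `u ++ (!e) :: v`, recorded as the pairs `(u, v)`. -/
def splits (e : Bool) : List Bool → List (List Bool × List Bool)
  | [] => []
  | x :: w => (if x = !e then [([], w)] else []) ++ (splits e w).map fun p => (x :: p.1, p.2)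

theorem length_of_mem_splits {e : Bool} {w : List Bool} {p : List Bool × List Bool}
    (hp : p ∈ splits e w) : p.1.length + p.2.length + 1 = w.length := by
  induction w generalizing p with
  | nil => simp [splits] at hp
  | cons x w ih =>
    simp only [splits, List.mem_append, List.mem_map] at hp
    rcases hp with hp | ⟨q, hq, rfl⟩
    · split_ifs at hp
      · simp only [List.mem_singleton] at hp
        subst hp
        simp
      · simp at hp
    · have := ih hq
      simp only [List.length_cons]
      omega

/-- The number of non-crossing pairings of the letters of a word which pair unequal letters,
defined by recursion on the partner of the first letter. -/
def ncCount : List Bool → ℕ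
  | [] => 1
  | e :: w => ((splits e w).attach.map fun p => ncCount p.1.1 * ncCount p.1.2).sum
termination_by w => w.length
decreasing_by
  all_goals
    have := length_of_mem_splits p.2
    simp only [List.length_cons]
    omega

theorem ncCount_cons (e : Bool) (w : List Bool) :
    ncCount (e :: w) = ((splits e w).map fun p => ncCount p.1 * ncCount p.2).sum := by
  rw [ncCount]
  exact congrArg List.sum
    (List.attach_map_val (f := fun p : List Bool × List Bool => ncCount p.1 * ncCount p.2))

/-- All families of words obtained by splitting one member of the family `W` at a letter `!e` and
inserting the word `w` cyclically at this place. -/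
def merges (e : Bool) (w : List Bool) : List (List Bool) → List (List (List Bool))
  | [] => []
  | w' :: W => ((splits e w').map fun p => (w ++ (p.2 ++ p.1)) :: W) ++
      (merges e w W).map fun V => w' :: V

/-- The number of words of a family plus their total length. -/
def familySize (W : List (List Bool)) : ℕ := (W.map fun w => w.length + 1).sum

theorem of_mem_merges {e : Bool} {w : List Bool} {W V : List (List Bool)}
    (hV : V ∈ merges e w W) :
    V.length = W.length ∧ familySize V < familySize ((e :: w) :: W) := by
  induction W generalizing V with
  | nil => simp [merges] at hV
  | cons w' W ih =>
    simp only [merges, List.mem_append, List.mem_map] at hV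
    rcases hV with ⟨p, hp, rfl⟩ | ⟨q, hq, rfl⟩
    · have := length_of_mem_splits hp
      simp only [familySize, List.length_cons, List.map_cons, List.sum_cons, List.length_append,
        true_and]
      omega
    · have := ih hq
      simp only [familySize, List.length_cons, List.map_cons, List.sum_cons] at this ⊢
      omega

section SchwingerDyson

variable {n R : Type*} [Fintype n] [DecidableEq n] [CommRing R]

/-- The product of the matrices `A e` along a word. -/
def wordProd (A : Bool → Matrix n n R) (w : List Bool) : Matrix n n R := (w.map A).prod

/-- The product of the traces of a family of words in the matrices `A e`. -/
def traceProd (A : Bool → Matrix n n R) (W : List (List Bool)) : R :=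
  (W.map fun w => (wordProd A w).trace).prod

theorem wordProd_cons (A : Bool → Matrix n n R) (e : Bool) (w : List Bool) :
    wordProd A (e :: w) = A e * wordProd A w := by
  simp [wordProd]

theorem wordProd_append (A : Bool → Matrix n n R) (u v : List Bool) :
    wordProd A (u ++ v) = wordProd A u * wordProd A v := by
  simp [wordProd]

theorem traceProd_cons (A : Bool → Matrix n n R) (w : List Bool) (W : List (List Bool)) :
    traceProd A (w :: W) = (wordProd A w).trace * traceProd A W := by
  simp [traceProd]

variable [Algebra ℂ R] {A : Bool → Matrix n n R} {D : Bool → n → n → Derivation ℂ R R}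

theorem derivation_wordProd
    (hD : ∀ e i j e' k l, D e i j (A e' k l) = if e' = e ∧ k = i ∧ l = j then 1 else 0)
    (e : Bool) (i j : n) (w : List Bool) (a b : n) :
    D (!e) i j (wordProd A w a b) =
      ((splits e w).map fun p => wordProd A p.1 a i * wordProd A p.2 j b).sum := by
  induction w generalizing a b with
  | nil =>
    by_cases hab : a = b <;> simp [wordProd, splits, hab]
  | cons x w ih =>
    rw [wordProd_cons, Matrix.mul_apply, map_sum]
    simp only [Derivation.leibniz, hD, ih, smul_eq_mul, Finset.sum_add_distrib, splits,
      List.map_append, List.sum_append, List.map_map]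
    rw [add_comm]
    congr 1
    · by_cases hx : x = !e
      · by_cases ha : a = i <;> simp [hx, ha, wordProd]
      · simp [hx]
    · simp only [← List.sum_map_mul_left]
      induction splits e w with
      | nil => simp
      | cons p l ihl =>
        simp only [List.map_cons, List.sum_cons, Finset.sum_add_distrib, ihl, Function.comp_apply]
        congr 1
        rw [wordProd_cons, Matrix.mul_apply, Finset.sum_mul]
        exact Finset.sum_congr rfl fun c _ => by ring

theorem sum_derivation_traceProd
    (hD : ∀ e i j e' k l, D e i j (A e' k l) = if e' = e ∧ k = i ∧ l = j then 1 else 0)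
    (e : Bool) (w : List Bool) (W : List (List Bool)) :
    ∑ i, ∑ j, wordProd A w j i * D (!e) j i (traceProd A W) =
      ((merges e w W).map (traceProd A)).sum := by
  induction W with
  | nil => simp [traceProd, merges]
  | cons w' W ih =>
    simp only [traceProd_cons, Derivation.leibniz, smul_eq_mul, mul_add, Finset.sum_add_distrib,
      merges, List.map_append, List.sum_append, List.map_map]
    rw [add_comm]
    congr 1
    · have h1 : ∀ i j, D (!e) j i (wordProd A w').trace =
          ((splits e w').map fun p => wordProd A (p.2 ++ p.1) i j).sum := by
        intro i j
        simp only [Matrix.trace, Matrix.diag_apply, map_sum, derivation_wordProd hD]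
        induction splits e w' with
        | nil => simp
        | cons p l ihl =>
          simp only [List.map_cons, List.sum_cons, Finset.sum_add_distrib, ihl]
          congr 1
          rw [wordProd_append, Matrix.mul_apply]
          exact Finset.sum_congr rfl fun c _ => by ring
      simp only [h1]
      induction splits e w' with
      | nil => simp
      | cons p l ihl =>
        simp only [List.map_cons, List.sum_cons, mul_add, Finset.sum_add_distrib, ihl,
          Function.comp_apply]
        congr 1
        rw [traceProd_cons, Matrix.trace, Finset.sum_mul, Finset.sum_comm]
        refine Finset.sum_congr rfl fun j _ => ?_
        rw [Matrix.diag_apply, wordProd_append A w, Matrix.mul_apply, Finset.sum_mul,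
          wordProd_append]
        exact Finset.sum_congr rfl fun i _ => by ring
    · have h2 : (traceProd A ∘ fun V => w' :: V) =
          fun V => (wordProd A w').trace * traceProd A V := by
        funext V
        simp [traceProd_cons]
      rw [h2, List.sum_map_mul_left, ← ih, Finset.mul_sum]
      refine Finset.sum_congr rfl fun i _ => ?_
      rw [Finset.mul_sum]
      exact Finset.sum_congr rfl fun j _ => by ring

/-- The Schwinger–Dyson (loop) equation for a functional satisfying Gaussian integration by
parts. -/
theorem schwingerDyson
    (hD : ∀ e i j e' k l, D e i j (A e' k l) = if e' = e ∧ k = i ∧ l = j then 1 else 0)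
    {L : R →ₗ[ℂ] ℂ} {c : ℂ} (hL : ∀ e i j f, L (A e i j * f) = c * L (D (!e) j i f))
    (e : Bool) (w : List Bool) (W : List (List Bool)) :
    L (traceProd A ((e :: w) :: W)) =
      c * (((splits e w).map fun p => L (traceProd A (p.1 :: p.2 :: W))).sum +
        ((merges e w W).map fun V => L (traceProd A V)).sum) := by
  have h1 : traceProd A ((e :: w) :: W) =
      ∑ i, ∑ j, A e i j * (wordProd A w j i * traceProd A W) := by
    simp only [traceProd_cons, wordProd_cons, Matrix.trace, Matrix.diag_apply, Matrix.mul_apply,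
      Finset.sum_mul, mul_assoc]
  have h2 : ∑ i, ∑ j, D (!e) j i (wordProd A w j i * traceProd A W) =
      ((splits e w).map fun p => traceProd A (p.1 :: p.2 :: W)).sum +
        ((merges e w W).map (traceProd A)).sum := by
    simp only [Derivation.leibniz, smul_eq_mul, Finset.sum_add_distrib,
      sum_derivation_traceProd hD]
    rw [add_comm]
    congr 1
    simp only [derivation_wordProd hD]
    induction splits e w with
    | nil => simp
    | cons p l ihl =>
      simp only [List.map_cons, List.sum_cons, mul_add, Finset.sum_add_distrib, ihl]
      congr 1
      simp only [traceProd_cons, Matrix.trace, Matrix.diag_apply]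
      rw [Finset.sum_comm, Finset.sum_mul]
      refine Finset.sum_congr rfl fun j _ => ?_
      rw [Finset.sum_mul, Finset.mul_sum]
      exact Finset.sum_congr rfl fun i _ => by ring
  rw [h1]
  simp only [map_sum, hL, ← Finset.mul_sum]
  simp only [← map_sum, h2, map_add, map_list_sum, List.map_map, Function.comp_def]

end SchwingerDyson

/-- Asymptotic factorization: a sequence of functionals on families of words which satisfies the
loop equation up to order `N⁻²` converges to products of non-crossing pairing counts. -/
theorem tendsto_prod_ncCount {φ : ℕ → List (List Bool) → ℂ} (h_nil : ∀ᶠ N in atTop, φ N [] = 1)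
    (h_empty : ∀ᶠ N in atTop, ∀ W, φ N ([] :: W) = φ N W)
    (h_cons : ∀ᶠ N in atTop, ∀ e w W, φ N ((e :: w) :: W) =
      ((splits e w).map fun p => φ N (p.1 :: p.2 :: W)).sum +
        (1 / (N : ℂ)) ^ 2 * ((merges e w W).map fun V => φ N V).sum)
    (W : List (List Bool)) :
    Tendsto (fun N => φ N W) atTop (nhds ((W.map fun w => (ncCount w : ℂ)).prod)) := by
  induction hs : familySize W using Nat.strong_induction_on generalizing W with
  | _ s ih =>
  subst hs
  match W with
  | [] =>
    simpa using tendsto_const_nhds.congr' (h_nil.mono fun N h => h.symm)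
  | [] :: W =>
    have := ih (familySize W) (by simp [familySize]) W rfl
    simpa [ncCount] using this.congr' (h_empty.mono fun N h => (h W).symm)
  | (e :: w) :: W =>
    have h1 : Tendsto (fun N => ((splits e w).map fun p => φ N (p.1 :: p.2 :: W)).sum) atTop
        (nhds ((splits e w).map fun p =>
          ((p.1 :: p.2 :: W).map fun w => (ncCount w : ℂ)).prod).sum) := by
      refine tendsto_list_sum _ fun p hp => ih _ ?_ _ rfl
      have := length_of_mem_splits hp
      simp only [familySize, List.length_cons, List.map_cons, List.sum_cons]
      omega
    have h2 : Tendsto (fun N => ((merges e w W).map fun V => φ N V).sum) atTop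
        (nhds ((merges e w W).map fun V => (V.map fun w => (ncCount w : ℂ)).prod).sum) :=
      tendsto_list_sum _ fun V hV => ih _ (of_mem_merges hV).2 _ rfl
    have h3 : Tendsto (fun N : ℕ => (1 / (N : ℂ)) ^ 2) atTop (nhds 0) := by
      simpa using (tendsto_one_div_atTop_nhds_zero_nat (𝕜 := ℂ)).pow 2
    have h4 := h1.add (h3.mul h2)
    rw [zero_mul, add_zero] at h4
    convert h4.congr' (h_cons.mono fun N h => (h e w W).symm) using 2
    simp only [List.map_cons, List.prod_cons, ← mul_assoc, List.sum_map_mul_right]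
    congr 1
    rw [ncCount_cons]
    push_cast [Nat.cast_list_sum, List.map_map, Function.comp_def]
    rfl

/-- The word formed by the letters of `w` at the positions `a, …, a + n - 1`. -/
def letterSegment (w : ℕ → Bool) (a n : ℕ) : List Bool := (List.range' a n).map w

theorem letterSegment_succ (w : ℕ → Bool) (a n : ℕ) :
    letterSegment w a (n + 1) = w a :: letterSegment w (a + 1) n := by
  simp [letterSegment, List.range'_succ]

theorem sum_splits_letterSegment (w : ℕ → Bool) (e : Bool) (n a : ℕ)
    (F : List Bool × List Bool → ℕ) :
    ((splits e (letterSegment w a n)).map F).sum = ∑ i ∈ Finset.range n,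
      if w (a + i) = !e then
        F (letterSegment w a i, letterSegment w (a + i + 1) (n - i - 1)) else 0 := by
  induction n generalizing a F with
  | zero => simp [letterSegment, splits]
  | succ n ih =>
    rw [letterSegment_succ, splits, List.map_append, List.sum_append, List.map_map, ih,
      Finset.sum_range_succ', add_comm]
    congr 1
    · refine Finset.sum_congr rfl fun i _ => ?_
      rw [show a + 1 + i = a + (i + 1) by omega, show n + 1 - (i + 1) - 1 = n - i - 1 by omega]
      simp only [Function.comp_apply, letterSegment_succ]
    · by_cases h : w a = !e <;> simp [h, letterSegment]

/-- `f` is an involution of the interval `[a, b)` encoding a non-crossing pairing which matches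
unequal letters of `w`; outside the interval `f` is the identity. -/
structure IsNCMatching (w : ℕ → Bool) (a b : ℕ) (f : ℕ → ℕ) : Prop where
  outside : ∀ x, x < a ∨ b ≤ x → f x = x
  lower : ∀ x, a ≤ x → x < b → a ≤ f x
  upper : ∀ x, a ≤ x → x < b → f x < b
  invol : ∀ x, f (f x) = x
  letter : ∀ x, a ≤ x → x < b → w (f x) ≠ w x
  nested : ∀ x y, x < y → y < f x → f y ≤ f x

/-- Matching `a` with `p` and using `f` between `a` and `p`, and `g` beyond `p`. -/
def glue (a p : ℕ) (f g : ℕ → ℕ) (x : ℕ) : ℕ :=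
  if x = a then p else if x = p then a else if x < p then f x else g x

theorem IsNCMatching.glue {w : ℕ → Bool} {a p b : ℕ} {f g : ℕ → ℕ} (hap : a < p) (hpb : p < b)
    (hw : w p ≠ w a) (hf : IsNCMatching w (a + 1) p f) (hg : IsNCMatching w (p + 1) b g) :
    IsNCMatching w a b (glue a p f g) := by
  obtain ⟨f1, f2, f3, f4, f5, f6⟩ := hf
  obtain ⟨g1, g2, g3, g4, g5, g6⟩ := hg
  have at_left : _root_.glue a p f g a = p := by simp [_root_.glue]
  have at_right : _root_.glue a p f g p = a := by simp [_root_.glue, hap.ne']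
  have before : ∀ x, x < a → _root_.glue a p f g x = x := by
    intro x hx
    rw [_root_.glue, if_neg (by omega), if_neg (by omega), if_pos (by omega), f1 x (by omega)]
  have inner : ∀ x, a < x → x < p → _root_.glue a p f g x = f x ∧ a < f x ∧ f x < p := by
    intro x hx hx'
    have := f2 x hx hx'
    refine ⟨?_, by omega, f3 x hx hx'⟩
    rw [_root_.glue, if_neg (by omega), if_neg (by omega), if_pos (by omega)]
  have outer : ∀ x, p < x → _root_.glue a p f g x = g x ∧ p < g x := by
    intro x hx
    constructor
    · rw [_root_.glue, if_neg (by omega), if_neg (by omega), if_neg (by omega)]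
    · by_cases hxb : x < b
      · exact g2 x hx hxb
      · rwa [g1 x (by omega)]
  constructor
  · grind [_root_.glue]
  · grind [_root_.glue]
  · grind [_root_.glue]
  · intro x
    rcases lt_trichotomy x a with h | rfl | h
    · rw [before x h, before x h]
    · rw [at_left, at_right]
    rcases lt_trichotomy x p with h' | rfl | h'
    · obtain ⟨e, l, u⟩ := inner x h h'
      rw [e, (inner _ l u).1, f4]
    · rw [at_right, at_left]
    · obtain ⟨e, l⟩ := outer x h'
      rw [e, (outer _ l).1, g4]
  · grind [_root_.glue]
  · intro x y hxy hy
    rcases lt_trichotomy x a with h | rfl | h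
    · rw [before x h] at hy
      omega
    · rw [at_left] at hy ⊢
      obtain ⟨e, l, u⟩ := inner y hxy hy
      omega
    rcases lt_trichotomy x p with h' | rfl | h'
    · obtain ⟨e, l, u⟩ := inner x h h'
      rw [e] at hy ⊢
      rw [(inner y (by omega) (by omega)).1]
      exact f6 x y hxy hy
    · rw [at_right] at hy
      omega
    · rw [(outer x h').1] at hy ⊢
      rw [(outer y (by omega)).1]
      exact g6 x y hxy hy

theorem glue_injective {w : ℕ → Bool} {a p b : ℕ} {f g f' g' : ℕ → ℕ} (hap : a < p)
    (hf : IsNCMatching w (a + 1) p f) (hg : IsNCMatching w (p + 1) b g)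
    (hf' : IsNCMatching w (a + 1) p f') (hg' : IsNCMatching w (p + 1) b g')
    (h : glue a p f g = glue a p f' g') : f = f' ∧ g = g' := by
  have h0 : ∀ x, glue a p f g x = glue a p f' g' x := fun x => by rw [h]
  have f1 := hf.outside
  have f2 := hf'.outside
  have g1 := hg.outside
  have g2 := hg'.outside
  constructor <;> funext x <;> have hx := h0 x <;> grind [glue]

theorem IsNCMatching.exists_glue {w : ℕ → Bool} {a b : ℕ} {h : ℕ → ℕ} (hab : a < b)
    (hh : IsNCMatching w a b h) : a < h a ∧ h a < b ∧ w (h a) ≠ w a ∧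
      ∃ f g, IsNCMatching w (a + 1) (h a) f ∧ IsNCMatching w (h a + 1) b g ∧
        _root_.glue a (h a) f g = h := by
  obtain ⟨h1, h2, h3, h4, h5, h6⟩ := hh
  have hne : h a ≠ a := fun e => h5 a le_rfl hab (by rw [e])
  have hlt : a < h a := lt_of_le_of_ne (h2 a le_rfl hab) hne.symm
  have inner : ∀ x, a < x → x < h a → a < h x ∧ h x < h a := by
    intro x hx hx'
    have := h6 a x hx hx'
    have := h4 x
    have := h4 a
    have := h2 x
    have := h3 a
    grind
  have outer : ∀ x, h a < x → x < b → h a < h x := by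
    intro x hx hx'
    have := inner (h x)
    have := h4 x
    have := h4 a
    have := h2 x
    grind
  refine ⟨hlt, h3 a le_rfl hab, h5 a le_rfl hab, fun x => if a < x ∧ x < h a then h x else x,
    fun x => if h a < x then h x else x, ?_, ?_, ?_⟩
  · constructor <;> grind
  · constructor <;> grind
  · funext x
    grind [_root_.glue]

open Classical in
theorem exists_finset_ncMatching (w : ℕ → Bool) (n a : ℕ) :
    ∃ F : Finset (ℕ → ℕ), (∀ f, f ∈ F ↔ IsNCMatching w a (a + n) f) ∧
      F.card = ncCount (letterSegment w a n) := by
  induction n using Nat.strong_induction_on generalizing a with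
  | _ n ih =>
  match n with
  | 0 =>
    refine ⟨{id}, fun f => ?_, by simp [letterSegment, ncCount]⟩
    rw [Finset.mem_singleton]
    constructor
    · rintro rfl
      constructor <;> grind
    · intro hf
      funext x
      exact hf.outside x (by omega)
  | m + 1 =>
    choose! F hF hcard using ih
    have mem_left : ∀ i < m, ∀ f, f ∈ F i (a + 1) ↔ IsNCMatching w (a + 1) (a + 1 + i) f :=
      fun i hi f => hF i (by omega) (a + 1) f
    have mem_right : ∀ i < m, ∀ g, g ∈ F (m - i - 1) (a + 1 + i + 1) ↔
        IsNCMatching w (a + 1 + i + 1) (a + (m + 1)) g := by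
      intro i hi g
      rw [hF (m - i - 1) (by omega), show a + 1 + i + 1 + (m - i - 1) = a + (m + 1) by omega]
    refine ⟨(Finset.range m).biUnion fun i => if w (a + 1 + i) = !w a then
      (F i (a + 1) ×ˢ F (m - i - 1) (a + 1 + i + 1)).image
        fun q => glue a (a + 1 + i) q.1 q.2 else ∅, fun f => ?_, ?_⟩
    · simp only [Finset.mem_biUnion, Finset.mem_range]
      constructor
      · rintro ⟨i, hi, hf⟩
        split_ifs at hf with hw
        · simp only [Finset.mem_image, Finset.mem_product, Prod.exists] at hf
          obtain ⟨f, g, ⟨hf, hg⟩, rfl⟩ := hf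
          exact ((mem_left i hi f).1 hf).glue (by omega) (by omega) (by simp [hw])
            ((mem_right i hi g).1 hg)
        · simp at hf
      · intro hf
        obtain ⟨h1, h2, h3, g, g', hg, hg', h⟩ := hf.exists_glue (by omega)
        have hi : a + 1 + (f a - a - 1) = f a := by omega
        refine ⟨f a - a - 1, by omega, ?_⟩
        rw [hi, if_pos (Bool.eq_not.2 h3)]
        refine Finset.mem_image.2 ⟨(g, g'), Finset.mem_product.2 ⟨?_, ?_⟩, h⟩
        · rw [mem_left _ (by omega), hi]
          exact hg
        · have := mem_right (f a - a - 1) (by omega) g'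
          rw [hi] at this
          exact this.2 hg'
    · rw [Finset.card_biUnion, letterSegment_succ, ncCount_cons, sum_splits_letterSegment]
      · refine Finset.sum_congr rfl fun i hi => ?_
        have hi := Finset.mem_range.1 hi
        split_ifs
        · rw [Finset.card_image_of_injOn, Finset.card_product, hcard _ (by omega),
            hcard _ (by omega)]
          rintro ⟨f, g⟩ hq ⟨f', g'⟩ hq' h
          simp only [Finset.coe_product, Set.mem_prod, Finset.mem_coe, mem_left i hi,
            mem_right i hi] at hq hq'
          exact Prod.ext_iff.2 (glue_injective (by omega) hq.1 hq.2 hq'.1 hq'.2 h)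
        · rfl
      · intro i _ j _ hij
        rw [Function.onFun, Finset.disjoint_left]
        intro f hf hf'
        have key : ∀ l, f ∈ (if w (a + 1 + l) = !w a then
            (F l (a + 1) ×ˢ F (m - l - 1) (a + 1 + l + 1)).image
              fun q => glue a (a + 1 + l) q.1 q.2 else ∅) → f a = a + 1 + l := by
          intro l hl
          split_ifs at hl
          · obtain ⟨q, -, rfl⟩ := Finset.mem_image.1 hl
            simp [glue]
          · simp at hl
        have := key i hf
        have := key j hf'
        omega

/-- An involution of `Fin k` encoding a non-crossing pairing which matches unequal letters. -/
structure IsNCInvolution {k : ℕ} (ε : Fin k → Bool) (g : Fin k → Fin k) : Prop where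
  invol : ∀ x, g (g x) = x
  letter : ∀ x, ε (g x) ≠ ε x
  nested : ∀ x y, x < y → y < g x → g y ≤ g x

theorem IsNCInvolution.ne {k : ℕ} {ε : Fin k → Bool} {g : Fin k → Fin k}
    (hg : IsNCInvolution ε g) (x : Fin k) : g x ≠ x :=
  fun h => hg.letter x (by rw [h])

/-- Involutions of `Fin k` as functions on the natural numbers. -/
noncomputable def ncInvolutionEquiv {k : ℕ} (w : ℕ → Bool) :
    {g : Fin k → Fin k // IsNCInvolution (fun i : Fin k => w i) g} ≃
      {f : ℕ → ℕ // IsNCMatching w 0 k f} where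
  toFun g := ⟨fun x => if h : x < k then g.1 ⟨x, h⟩ else x, by
    obtain ⟨g, h1, h2, h3⟩ := g
    constructor
    · grind
    · grind
    · grind
    · intro x
      by_cases hx : x < k <;> simp [hx, h1]
    · intro x _ hx
      simpa [hx] using h2 ⟨x, hx⟩
    · intro x y hxy hy
      by_cases hx : x < k
      · simp only [hx, dite_true] at hy ⊢
        have hy' : y < k := by omega
        simpa [hy'] using h3 ⟨x, hx⟩ ⟨y, hy'⟩ hxy hy
      · simp only [hx, dite_false] at hy
        omega⟩
  invFun f := ⟨fun x => ⟨f.1 x, f.2.upper x (Nat.zero_le _) x.2⟩, by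
    obtain ⟨f, hf⟩ := f
    exact ⟨fun x => Fin.ext (hf.invol x), fun x => hf.letter x (Nat.zero_le _) x.2,
      fun x y hxy hy => hf.nested x y hxy hy⟩⟩
  left_inv g := by
    ext x
    simp
  right_inv f := by
    ext x
    by_cases hx : x < k
    · simp [hx]
    · simp [hx, f.2.outside x (by omega)]

/-- The partition into the orbits of an involution. -/
def orbitPartition {k : ℕ} (g : Fin k → Fin k) (hg : ∀ x, g (g x) = x) :
    Finpartition (Finset.univ : Finset (Fin k)) :=
  Finpartition.ofExistsUnique (Finset.univ.image fun x => {x, g x})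
    (fun _ _ => Finset.subset_univ _)
    (by
      intro a _
      refine ⟨{a, g a}, ⟨Finset.mem_image_of_mem _ (Finset.mem_univ a), by simp⟩, ?_⟩
      rintro t ⟨ht, hat⟩
      obtain ⟨x, -, rfl⟩ := Finset.mem_image.1 ht
      simp only [Finset.mem_insert, Finset.mem_singleton] at hat
      rcases hat with rfl | rfl
      · rfl
      · rw [hg, Finset.pair_comm])
    (by
      intro h
      obtain ⟨x, -, hx⟩ := Finset.mem_image.1 h
      exact absurd hx (Finset.insert_ne_empty _ _))

theorem mem_parts_orbitPartition {k : ℕ} {g : Fin k → Fin k} (hg : ∀ x, g (g x) = x)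
    {B : Finset (Fin k)} : B ∈ (orbitPartition g hg).parts ↔ ∃ x, {x, g x} = B := by
  simp [orbitPartition, Finpartition.ofExistsUnique]

theorem eq_pair_of_mem_orbitPartition {k : ℕ} {g : Fin k → Fin k} (hg : ∀ x, g (g x) = x)
    {B : Finset (Fin k)} (hB : B ∈ (orbitPartition g hg).parts) {x : Fin k} (hx : x ∈ B) :
    B = {x, g x} :=
  (orbitPartition g hg).eq_of_mem_parts hB ((mem_parts_orbitPartition hg).2 ⟨x, rfl⟩)
    hx (by simp)

theorem orbitPartition_spec {k : ℕ} {ε : Fin k → Bool} {g : Fin k → Fin k}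
    (hg : IsNCInvolution ε g) : IsPairing (orbitPartition g hg.invol) ∧
      IsNonCrossing (orbitPartition g hg.invol) ∧
      ∀ B ∈ (orbitPartition g hg.invol).parts, ∀ a ∈ B, ∀ b ∈ B, a ≠ b → ε a ≠ ε b := by
  refine ⟨?_, ?_, ?_⟩
  · intro B hB
    obtain ⟨x, rfl⟩ := (mem_parts_orbitPartition hg.invol).1 hB
    exact Finset.card_pair (hg.ne x).symm
  · rintro ⟨a, b, c, d, B, B', hab, hbc, hcd, hB, hB', -, ha, hc, hb, hd⟩
    rw [eq_pair_of_mem_orbitPartition hg.invol hB ha] at hc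
    rw [eq_pair_of_mem_orbitPartition hg.invol hB' hb] at hd
    simp only [Finset.mem_insert, Finset.mem_singleton, (hab.trans hbc).ne',
      (hbc.trans hcd).ne', false_or] at hc hd
    have := hg.nested a b hab (hc ▸ hbc)
    rw [← hc, ← hd] at this
    exact absurd hcd this.not_gt
  · intro B hB a ha b hb hab
    rw [eq_pair_of_mem_orbitPartition hg.invol hB ha] at hb
    simp only [Finset.mem_insert, Finset.mem_singleton, hab.symm, false_or] at hb
    rw [hb]
    exact (hg.letter a).symm

theorem exists_orbitPartition {k : ℕ} {ε : Fin k → Bool}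
    {π : Finpartition (Finset.univ : Finset (Fin k))} (h1 : IsPairing π) (h2 : IsNonCrossing π)
    (h3 : ∀ B ∈ π.parts, ∀ a ∈ B, ∀ b ∈ B, a ≠ b → ε a ≠ ε b) :
    ∃ g, ∃ hg : IsNCInvolution ε g, orbitPartition g hg.invol = π := by
  have hpart : ∀ x, π.part x ∈ π.parts := fun x => π.part_mem.2 (Finset.mem_univ x)
  have hmem : ∀ x, x ∈ π.part x := fun x => π.mem_part (Finset.mem_univ x)
  have hex : ∀ x, ∃ y, x ≠ y ∧ π.part x = {x, y} := by
    intro x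
    obtain ⟨a, b, hab, h⟩ := Finset.card_eq_two.1 (h1 _ (hpart x))
    have hx := hmem x
    rw [h, Finset.mem_insert, Finset.mem_singleton] at hx
    rcases hx with rfl | rfl
    · exact ⟨b, hab, h⟩
    · exact ⟨a, hab.symm, by rw [h, Finset.pair_comm]⟩
  choose g hne hg using hex
  have hgmem : ∀ x, g x ∈ π.part x := fun x => by simp [hg x]
  have hpart_g : ∀ x, π.part (g x) = π.part x := fun x => π.part_eq_of_mem (hpart x) (hgmem x)
  have hinv : ∀ x, g (g x) = x := by
    intro x
    have h : x ∈ π.part (g x) := by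
      rw [hpart_g]
      exact hmem x
    rw [hg (g x), Finset.mem_insert, Finset.mem_singleton] at h
    exact (h.resolve_left (hne x)).symm
  refine ⟨g, ⟨hinv, fun x => h3 _ (hpart x) _ (hgmem x) _ (hmem x) (hne x).symm, ?_⟩, ?_⟩
  · intro x y hxy hy
    by_contra! hlt
    refine h2 ⟨x, y, g x, g y, π.part x, π.part y, hxy, hy, hlt, hpart x, hpart y, ?_, hmem x,
      hgmem x, hmem y, hgmem y⟩
    intro h
    have hyx := hmem y
    rw [← h, hg x, Finset.mem_insert, Finset.mem_singleton] at hyx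
    rcases hyx with rfl | rfl
    · exact lt_irrefl _ hxy
    · exact lt_irrefl _ hy
  · ext B
    rw [mem_parts_orbitPartition]
    constructor
    · rintro ⟨x, rfl⟩
      rw [← hg x]
      exact hpart x
    · intro hB
      obtain ⟨x, hx⟩ := π.nonempty_of_mem_parts hB
      exact ⟨x, by rw [← hg x, π.part_eq_of_mem hB hx]⟩

theorem card_ncPairings (k : ℕ) (ε : Fin k → Bool) :
    Nat.card {π : Finpartition (Finset.univ : Finset (Fin k)) //
      IsPairing π ∧ IsNonCrossing π ∧
        ∀ B ∈ π.parts, ∀ a ∈ B, ∀ b ∈ B, a ≠ b → ε a ≠ ε b} = ncCount (List.ofFn ε) := by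
  obtain ⟨w, rfl⟩ : ∃ w : ℕ → Bool, ε = fun i : Fin k => w i :=
    ⟨fun n => if h : n < k then ε ⟨n, h⟩ else false, by simp⟩
  obtain ⟨F, hF, hcard⟩ := exists_finset_ncMatching w k 0
  have hseg : List.ofFn (fun i : Fin k => w i) = letterSegment w 0 k := by
    apply List.ext_getElem <;> simp [letterSegment]
  rw [hseg, ← hcard, ← Nat.card_eq_finsetCard F]
  simp only [zero_add] at hF
  refine Nat.card_congr (Equiv.trans (Equiv.ofBijective (fun g => ⟨orbitPartition g.1 g.2.invol,
    orbitPartition_spec g.2⟩) ⟨?_, ?_⟩).symm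
    ((ncInvolutionEquiv w).trans (Equiv.subtypeEquivRight fun f => (hF f).symm)))
  · rintro ⟨g, hg⟩ ⟨g', hg'⟩ h
    have h : orbitPartition g hg.invol = orbitPartition g' hg'.invol := congrArg Subtype.val h
    refine Subtype.ext (funext fun x => ?_)
    have hx : {x, g x} ∈ (orbitPartition g' hg'.invol).parts := by
      rw [← h, mem_parts_orbitPartition]
      exact ⟨x, rfl⟩
    have hgx : g x ∈ ({x, g' x} : Finset (Fin k)) := by
      rw [← eq_pair_of_mem_orbitPartition hg'.invol hx (Finset.mem_insert_self _ _)]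
      simp
    simpa [hg.ne x] using hgx
  · rintro ⟨π, h1, h2, h3⟩
    obtain ⟨g, hg, h⟩ := exists_orbitPartition h1 h2 h3
    exact ⟨⟨g, hg⟩, Subtype.ext h⟩

theorem integrable_pow_gaussianReal (n : ℕ) :
    Integrable (fun x : ℝ => x ^ n) (gaussianReal 0 (1 / 2)) :=
  integrable_pow_of_mem_interior_integrableExpSet (X := id) (by simp) n

theorem integrable_ofReal_pow_gaussianReal (n : ℕ) :
    Integrable (fun x : ℝ => (x : ℂ) ^ n) (gaussianReal 0 (1 / 2)) := by
  simpa using (integrable_pow_gaussianReal n).ofReal (𝕜 := ℂ)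

theorem integral_pow_succ_gaussianReal (n : ℕ) :
    ∫ x, x ^ (n + 1) ∂(gaussianReal 0 (1 / 2)) =
      1 / 2 * (n * ∫ x, x ^ (n - 1) ∂(gaussianReal 0 (1 / 2))) := by
  have hv : (1 / 2 : NNReal) ≠ 0 := by norm_num
  have hint : ∀ m : ℕ, Integrable fun x : ℝ => gaussianPDFReal 0 (1 / 2) x * x ^ m := by
    intro m
    have h := integrable_pow_gaussianReal m
    rw [gaussianReal_of_var_ne_zero _ hv, integrable_withDensity_iff_integrable_smul'
      (measurable_gaussianPDF _ _) (ae_of_all _ fun _ => gaussianPDF_lt_top)] at h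
    simpa using h
  have hpdf : ∀ x : ℝ, HasDerivAt (gaussianPDFReal 0 (1 / 2))
      (-2 * x * gaussianPDFReal 0 (1 / 2) x) x := by
    intro x
    have h1 : HasDerivAt (fun x : ℝ => -(x - 0) ^ 2 / (2 * ((1 / 2 : NNReal) : ℝ))) (-2 * x) x := by
      have := ((hasDerivAt_pow 2 x).neg).div_const (2 * ((1 / 2 : NNReal) : ℝ))
      simpa using this
    have h2 := (h1.exp).const_mul (√(2 * Real.pi * ((1 / 2 : NNReal) : ℝ)))⁻¹
    rw [gaussianPDFReal_def]
    exact h2.congr_deriv (by ring)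
  have key := integral_mul_deriv_eq_deriv_mul_of_integrable
    (u := fun x : ℝ => x ^ n) (v := gaussianPDFReal 0 (1 / 2))
    (fun x _ => hasDerivAt_pow n x) (fun x _ => hpdf x)
    (((hint (n + 1)).const_mul (-2)).congr (ae_of_all _ fun x => by simp only [Pi.mul_apply]; ring))
    (((hint (n - 1)).const_mul n).congr (ae_of_all _ fun x => by simp only [Pi.mul_apply]; ring))
    ((hint n).congr (ae_of_all _ fun x => by simp only [Pi.mul_apply]; ring))
  simp only [integral_gaussianReal_eq_integral_smul hv, smul_eq_mul]
  rw [← integral_const_mul, ← integral_const_mul]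
  have h1 : ∫ x : ℝ, x ^ n * (-2 * x * gaussianPDFReal 0 (1 / 2) x) =
      -2 * ∫ x, gaussianPDFReal 0 (1 / 2) x * x ^ (n + 1) := by
    rw [← integral_const_mul]
    exact integral_congr_ae (ae_of_all _ fun x => by ring)
  have h2 : ∫ x : ℝ, n * x ^ (n - 1) * gaussianPDFReal 0 (1 / 2) x =
      2 * ∫ x, 1 / 2 * (n * (gaussianPDFReal 0 (1 / 2) x * x ^ (n - 1))) := by
    rw [← integral_const_mul]
    exact integral_congr_ae (ae_of_all _ fun x => by ring)
  simp only [integral_const_mul] at h1 h2 key ⊢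
  linarith

/-- The moments of the centred real Gaussian of variance `1/2`, as complex numbers. -/
noncomputable def halfMoment (n : ℕ) : ℂ := ∫ x : ℝ, (x : ℂ) ^ n ∂(gaussianReal 0 (1 / 2))

theorem halfMoment_zero : halfMoment 0 = 1 := by
  simp [halfMoment]

theorem halfMoment_succ (n : ℕ) : halfMoment (n + 1) = 1 / 2 * (n * halfMoment (n - 1)) := by
  have h : ∀ m, halfMoment m = ((∫ x, x ^ m ∂(gaussianReal 0 (1 / 2)) : ℝ) : ℂ) := by
    intro m
    rw [halfMoment, ← integral_complex_ofReal]
    simp only [Complex.ofReal_pow]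
  rw [h, h, integral_pow_succ_gaussianReal]
  push_cast
  rfl

section Polynomial

variable {N : ℕ}

/-- The real and imaginary parts of the entries of the random matrix, as one family. -/
def entryParts (ω : Fin N → Fin N → ℝ × ℝ) (v : Fin N × Fin N × Bool) : ℂ :=
  if v.2.2 then ((ω v.1 v.2.1).2 : ℂ) else ((ω v.1 v.2.1).1 : ℂ)

theorem prod_entryParts_pow (ω : Fin N → Fin N → ℝ × ℝ) (s : Fin N × Fin N × Bool → ℕ) :
    ∏ v, entryParts ω v ^ s v = ∏ i, ∏ j,
      (((ω i j).1 : ℂ) ^ s (i, j, false) * ((ω i j).2 : ℂ) ^ s (i, j, true)) := by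
  simp [Fintype.prod_prod_type, entryParts, mul_comm]

theorem integrable_prod_entryParts_pow (s : Fin N × Fin N × Bool → ℕ) :
    Integrable (fun ω => ∏ v, entryParts ω v ^ s v) (gaussMatrixMeasure N) := by
  simp only [prod_entryParts_pow]
  exact Integrable.fintype_prod fun i => Integrable.fintype_prod fun j =>
    (integrable_ofReal_pow_gaussianReal _).mul_prod (integrable_ofReal_pow_gaussianReal _)

theorem integral_prod_entryParts_pow (s : Fin N × Fin N × Bool → ℕ) :
    ∫ ω, ∏ v, entryParts ω v ^ s v ∂(gaussMatrixMeasure N) = ∏ v, halfMoment (s v) := by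
  simp only [prod_entryParts_pow, gaussMatrixMeasure]
  rw [integral_fintype_prod_eq_prod (f := fun i (x : Fin N → ℝ × ℝ) =>
    ∏ j, (((x j).1 : ℂ) ^ s (i, j, false) * ((x j).2 : ℂ) ^ s (i, j, true)))]
  simp only [Fintype.prod_prod_type]
  refine Finset.prod_congr rfl fun i _ => ?_
  rw [integral_fintype_prod_eq_prod (f := fun j (x : ℝ × ℝ) =>
    ((x.1 : ℂ) ^ s (i, j, false) * (x.2 : ℂ) ^ s (i, j, true)))]
  refine Finset.prod_congr rfl fun j _ => ?_
  rw [integral_prod_mul (fun x : ℝ => (x : ℂ) ^ s (i, j, false))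
    (fun x : ℝ => (x : ℂ) ^ s (i, j, true))]
  simp [halfMoment, mul_comm]

theorem eval_monomial_entryParts (ω : Fin N → Fin N → ℝ × ℝ) (s : Fin N × Fin N × Bool →₀ ℕ)
    (a : ℂ) : MvPolynomial.eval (entryParts ω) (MvPolynomial.monomial s a) =
      a * ∏ v, entryParts ω v ^ s v := by
  rw [MvPolynomial.eval_monomial, Finsupp.prod_fintype _ _ fun _ => pow_zero _]

theorem integrable_eval_entryParts (f : MvPolynomial (Fin N × Fin N × Bool) ℂ) :
    Integrable (fun ω => MvPolynomial.eval (entryParts ω) f) (gaussMatrixMeasure N) := by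
  induction f using MvPolynomial.induction_on' with
  | monomial s a =>
    simp only [eval_monomial_entryParts]
    exact (integrable_prod_entryParts_pow _).const_mul a
  | add p q hp hq =>
    simp only [map_add]
    exact hp.add hq

/-- The expectation of polynomials in the real and imaginary parts of the entries. -/
noncomputable def polyExpectation (N : ℕ) : MvPolynomial (Fin N × Fin N × Bool) ℂ →ₗ[ℂ] ℂ where
  toFun f := ∫ ω, MvPolynomial.eval (entryParts ω) f ∂(gaussMatrixMeasure N)
  map_add' f g := by
    simpa using integral_add (integrable_eval_entryParts f) (integrable_eval_entryParts g)
  map_smul' a f := by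
    simp [MvPolynomial.smul_eval, integral_const_mul]

theorem polyExpectation_apply (f : MvPolynomial (Fin N × Fin N × Bool) ℂ) :
    polyExpectation N f = ∫ ω, MvPolynomial.eval (entryParts ω) f ∂(gaussMatrixMeasure N) := rfl

theorem polyExpectation_monomial (s : Fin N × Fin N × Bool →₀ ℕ) (a : ℂ) :
    polyExpectation N (MvPolynomial.monomial s a) = a * ∏ v, halfMoment (s v) := by
  simp only [polyExpectation_apply, eval_monomial_entryParts, integral_const_mul,
    integral_prod_entryParts_pow]

theorem polyExpectation_one : polyExpectation N 1 = 1 := by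
  simpa [halfMoment_zero] using polyExpectation_monomial (N := N) 0 1

/-- Gaussian integration by parts. -/
theorem polyExpectation_X_mul (v : Fin N × Fin N × Bool)
    (f : MvPolynomial (Fin N × Fin N × Bool) ℂ) :
    polyExpectation N (MvPolynomial.X v * f) =
      1 / 2 * polyExpectation N (MvPolynomial.pderiv v f) := by
  induction f using MvPolynomial.induction_on' with
  | monomial s a =>
    rw [MvPolynomial.X, MvPolynomial.monomial_mul, MvPolynomial.pderiv_monomial,
      polyExpectation_monomial, polyExpectation_monomial,
      ← Finset.mul_prod_erase _ _ (Finset.mem_univ v),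
      ← Finset.mul_prod_erase _ _ (Finset.mem_univ v)]
    have h : ∀ u ∈ Finset.univ.erase v, halfMoment ((Finsupp.single v 1 + s : _ →₀ ℕ) u) =
        halfMoment ((s - Finsupp.single v 1 : _ →₀ ℕ) u) := by
      intro u hu
      have : v ≠ u := (Finset.ne_of_mem_erase hu).symm
      simp [this]
    rw [Finset.prod_congr rfl h]
    simp only [Finsupp.coe_add, Pi.add_apply, Finsupp.single_eq_same, Finsupp.coe_tsub,
      Pi.sub_apply, add_comm 1, halfMoment_succ]
    ring
  | add p q hp hq => simp only [mul_add, map_add, hp, hq]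

/-- The entries of `Z` (for `false`) and of its adjoint (for `true`) as polynomials in the real
and imaginary parts. -/
noncomputable def entryPoly (N : ℕ) (e : Bool) :
    Matrix (Fin N) (Fin N) (MvPolynomial (Fin N × Fin N × Bool) ℂ) :=
  Matrix.of fun i j => if e then
      MvPolynomial.C (1 / (Real.sqrt N : ℂ)) *
        (MvPolynomial.X (j, i, false) - MvPolynomial.C I * MvPolynomial.X (j, i, true))
    else
      MvPolynomial.C (1 / (Real.sqrt N : ℂ)) *
        (MvPolynomial.X (i, j, false) + MvPolynomial.C I * MvPolynomial.X (i, j, true))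

/-- The Wirtinger derivations dual to `entryPoly`. -/
noncomputable def entryDeriv (N : ℕ) (e : Bool) (i j : Fin N) :
    Derivation ℂ (MvPolynomial (Fin N × Fin N × Bool) ℂ)
      (MvPolynomial (Fin N × Fin N × Bool) ℂ) :=
  if e then
    ((Real.sqrt N : ℂ) / 2) •
      (MvPolynomial.pderiv (j, i, false) + I • MvPolynomial.pderiv (j, i, true))
  else
    ((Real.sqrt N : ℂ) / 2) •
      (MvPolynomial.pderiv (i, j, false) - I • MvPolynomial.pderiv (i, j, true))

theorem entryDeriv_entryPoly (hN : N ≠ 0) (e : Bool) (i j : Fin N) (e' : Bool) (k l : Fin N) :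
    entryDeriv N e i j (entryPoly N e' k l) = if e' = e ∧ k = i ∧ l = j then 1 else 0 := by
  have hs : (Real.sqrt N : ℂ) ≠ 0 := by
    simpa using hN
  have hX : ∀ (a b : Fin N) (r : Bool) (c d : Fin N) (r' : Bool),
      MvPolynomial.pderiv (R := ℂ) (a, b, r) (MvPolynomial.X (c, d, r')) =
        if c = a ∧ d = b ∧ r' = r then 1 else 0 := by
    intro a b r c d r'
    simp [MvPolynomial.pderiv_X, Pi.single_apply, eq_comm]
  cases e <;> cases e' <;>
  simp only [entryPoly, entryDeriv, ← MvPolynomial.smul_eq_C_mul, Matrix.of_apply, if_true,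
    if_false, Bool.false_eq_true, Derivation.smul_apply, Derivation.add_apply,
    Derivation.sub_apply, Derivation.map_smul, map_add, map_sub, hX, and_true, and_false, true_and,
    false_and, reduceCtorEq, smul_zero, add_zero, zero_add, sub_zero, zero_sub,
    and_comm (a := l = j)] <;>
  split_ifs <;> match_scalars <;> field_simp <;> simp <;> norm_num

theorem polyExpectation_entryPoly_mul (hN : N ≠ 0) (e : Bool) (i j : Fin N)
    (f : MvPolynomial (Fin N × Fin N × Bool) ℂ) :
    polyExpectation N (entryPoly N e i j * f) =
      1 / (N : ℂ) * polyExpectation N (entryDeriv N (!e) j i f) := by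
  have hs : (Real.sqrt N : ℂ) ≠ 0 := by
    simpa using hN
  have hs2 : (N : ℂ) = (Real.sqrt N : ℂ) * (Real.sqrt N : ℂ) := by
    rw [← Complex.ofReal_mul, Real.mul_self_sqrt (Nat.cast_nonneg N), Complex.ofReal_natCast]
  rw [hs2]
  cases e <;>
  simp only [entryPoly, entryDeriv, Matrix.of_apply, ← MvPolynomial.smul_eq_C_mul, smul_mul_assoc,
    add_mul, sub_mul, map_smul, map_add, map_sub, polyExpectation_X_mul, Derivation.smul_apply,
    Derivation.add_apply, Derivation.sub_apply, smul_eq_mul, Bool.not_true, Bool.not_false,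
    if_true, if_false, Bool.false_eq_true] <;>
  field_simp

theorem eval_entryPoly (ω : Fin N → Fin N → ℝ × ℝ) (e : Bool) :
    (MvPolynomial.eval (entryParts ω)).mapMatrix (entryPoly N e) =
      if e then (gaussMatrix ω)ᴴ else gaussMatrix ω := by
  ext i j
  cases e <;> simp [entryPoly, gaussMatrix, entryParts, div_eq_inv_mul, sub_eq_add_neg, mul_comm I]

theorem eval_trace_wordProd (ω : Fin N → Fin N → ℝ × ℝ) (w : List Bool) :
    MvPolynomial.eval (entryParts ω) (wordProd (entryPoly N) w).trace =
      (w.map fun e : Bool => if e then (gaussMatrix ω)ᴴ else gaussMatrix ω).prod.trace := by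
  have h := map_list_prod (MvPolynomial.eval (entryParts ω)).mapMatrix (w.map (entryPoly N))
  rw [List.map_map] at h
  simp only [Function.comp_def, eval_entryPoly] at h
  rw [← h, wordProd]
  simp [Matrix.trace]

end Polynomial

theorem tendsto_integral_trace_word (w : List Bool) :
    Tendsto (fun N : ℕ => ∫ ω, (1 / (N : ℂ)) *
        (w.map fun e : Bool => if e then (gaussMatrix ω)ᴴ else gaussMatrix ω).prod.trace
        ∂(gaussMatrixMeasure N)) atTop (nhds (ncCount w : ℂ)) := by
  have h := tendsto_prod_ncCount
    (φ := fun N W => (1 / (N : ℂ)) ^ W.length * polyExpectation N (traceProd (entryPoly N) W))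
    (Eventually.of_forall fun N => by simp [traceProd, polyExpectation_one]) ?_ ?_ [w]
  · simpa [traceProd, polyExpectation_apply, eval_trace_wordProd, integral_const_mul] using h
  · filter_upwards [eventually_ne_atTop 0] with N hN W
    have : (N : ℂ) ≠ 0 := by exact_mod_cast hN
    have h1 : (wordProd (entryPoly N) []).trace = MvPolynomial.C (N : ℂ) := by
      simp [wordProd]
    rw [traceProd_cons, h1, ← MvPolynomial.smul_eq_C_mul, map_smul, List.length_cons, smul_eq_mul]
    rw [pow_succ, mul_assoc, ← mul_assoc (1 / (N : ℂ)), one_div_mul_cancel this, one_mul]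
  · filter_upwards [eventually_ne_atTop 0] with N hN e w W
    rw [schwingerDyson (entryDeriv_entryPoly hN) (polyExpectation_entryPoly_mul hN)]
    have h1 : ((merges e w W).map fun V => (1 / (N : ℂ)) ^ V.length *
        polyExpectation N (traceProd (entryPoly N) V)) =
        (merges e w W).map fun V => (1 / (N : ℂ)) ^ W.length *
          polyExpectation N (traceProd (entryPoly N) V) :=
      List.map_congr_left fun V hV => by rw [(of_mem_merges hV).1]
    rw [h1]
    simp only [List.length_cons, List.sum_map_mul_left]
    ring

/-- For a word `Z^{ε₁} ⋯ Z^{ε_k}` in a Gaussian matrix `Z = Z_N` and its adjoint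
(`ε i = true` meaning the adjoint `Z*`), the normalized expected trace converges, as
`N → ∞`, to the number of non-crossing pairings `π` of `{1,…,k}` such that `ε_a ≠ ε_b`
for every pair `{a,b} ∈ π`. -/
theorem gaussMatrix_word_moment_limit (k : ℕ) (ε : Fin k → Bool) :
    Tendsto
      (fun N : ℕ => ∫ ω, (1 / (N : ℂ)) *
          (((List.finRange k).map fun i =>
              if ε i then (gaussMatrix ω)ᴴ else gaussMatrix ω).prod).trace
          ∂(gaussMatrixMeasure N))
      atTop
      (nhds ((Nat.card {π : Finpartition (Finset.univ : Finset (Fin k)) //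
          IsPairing π ∧ IsNonCrossing π ∧
            ∀ B ∈ π.parts, ∀ a ∈ B, ∀ b ∈ B, a ≠ b → ε a ≠ ε b} : ℕ) : ℂ)) := by
  rw [card_ncPairings, List.ofFn_eq_map]
  simpa only [List.map_map, Function.comp_def] using
    tendsto_integral_trace_word ((List.finRange k).map ε)
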